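/- Let (α_n, β_n, γ_n)_{n≥0} be a stationary and ergodic sequence of triples of non-negative random variables with E|log α₀| < ∞, E|log β₀| < ∞ and E log⁺ γ₀ < ∞. (a) If max{E log α₀, E log β₀} < 0, then Σ_{n=0}^{∞} γ_n Σ_{k=0}^{n} α₀⋯α_{k−1} β_k⋯β_{n−1} < ∞ almost surely. (b) If E log α₀ < 0, then Σ_{n=0}^{∞} α₀⋯α_{n−1} γ_n < ∞ almost surely. -/

import Mathlib

/-!
The proof rests on one half of the pointwise ergodic theorem: if `c > ∫ f`, then almost surely the
Birkhoff sums satisfy `S_n f ≤ C + c n` for all `n`, with a random constant `C`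
(`ae_birkhoffSum_le`). By subtracting `c` this reduces to `∫ f < 0`, where the claim is that
`S_n f` is almost surely bounded above (`ae_bddAbove_birkhoffSum`). The event of boundedness is
`T`-invariant, so by ergodicity it otherwise has probability zero. In that case the running maxima
`M_n = max (0, S_1 f, …, S_n f)` increase to `∞` almost surely, hence
`M_{n+1} - M_n ∘ T = max (-M_n ∘ T, f)` converges to `f` under the bound `|f|`, while its integral
`∫ M_{n+1} - ∫ M_n` is nonnegative. This forces `∫ f ≥ 0`, a contradiction.

Applied to `(log⁺ γ - K)⁺` with a large `K`, the bound gives `log⁺ γ_n ≤ C + δ n`. Applied to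
`log α`, `log β` and `-log β`, it gives
`α₀⋯α_{k-1} β_k⋯β_{n-1} ≤ exp (C - ε n + 3 δ n)` uniformly in `k ≤ n`, when both means are at
most `-ε`. Choosing `δ = ε / 8` makes the `n`-th term of the series in (a) at most
`(n + 1) exp (C - ε n / 2)`. Part (b) follows from (a) with `β = α`, where the inner sum contains
the summand `k = n`.

The convention `Real.log 0 = 0` is harmless, since only `x ≤ exp (log x)` is used for `x ≥ 0`.
-/

open MeasureTheory Filter
open scoped ENNReal Topology

noncomputable section

/-- `log⁺ x = max (log x) 0`. -/
def plog (x : ℝ) : ℝ := max (Real.log x) 0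

/-- The running maximum `max (0, S_1 f, …, S_n f)` of the Birkhoff sums of `f`, defined by the
recursion `M_{n+1} = max (0, f + M_n ∘ T)`. -/
def runningMax {Ω : Type*} (T : Ω → Ω) (f : Ω → ℝ) : ℕ → Ω → ℝ
  | 0 => fun _ => 0
  | n + 1 => fun ω => max 0 (f ω + runningMax T f n (T ω))

section RunningMax

variable {Ω : Type*} {T : Ω → Ω} {f : Ω → ℝ}

lemma runningMax_nonneg (n : ℕ) (ω : Ω) : 0 ≤ runningMax T f n ω := by
  cases n with
  | zero => exact le_rfl
  | succ n => exact le_max_left _ _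

lemma runningMax_le_succ (n : ℕ) (ω : Ω) :
    runningMax T f n ω ≤ runningMax T f (n + 1) ω := by
  induction n generalizing ω with
  | zero => exact runningMax_nonneg 1 ω
  | succ n ih => exact max_le_max le_rfl (add_le_add le_rfl (ih (T ω)))

lemma birkhoffSum_le_runningMax (n : ℕ) (ω : Ω) :
    birkhoffSum T f n ω ≤ runningMax T f n ω := by
  induction n generalizing ω with
  | zero => simp [runningMax]
  | succ n ih =>
    rw [birkhoffSum_succ']
    exact (add_le_add le_rfl (ih (T ω))).trans (le_max_right _ _)

lemma runningMax_succ_sub (n : ℕ) (ω : Ω) :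
    runningMax T f (n + 1) ω - runningMax T f n (T ω)
      = max (-runningMax T f n (T ω)) (f ω) := by
  rw [runningMax, ← max_sub_sub_right]
  simp

lemma integrable_runningMax [MeasurableSpace Ω] {μ : Measure Ω} [IsFiniteMeasure μ]
    (hT : MeasurePreserving T μ μ) (hf : Integrable f μ) (n : ℕ) :
    Integrable (runningMax T f n) μ := by
  induction n with
  | zero => exact integrable_const 0
  | succ n ih => exact (integrable_const 0).sup (hf.add (hT.integrable_comp_of_integrable ih))

end RunningMax

section Ergodic

variable {Ω : Type*} [MeasurableSpace Ω] {μ : Measure Ω} [IsProbabilityMeasure μ]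
  {T : Ω → Ω} {f : Ω → ℝ}

lemma measurable_birkhoffSum (hT : Measurable T) (hf : Measurable f) (n : ℕ) :
    Measurable (birkhoffSum T f n) := by
  unfold birkhoffSum
  exact Finset.measurable_sum _ fun i _ => hf.comp (hT.iterate i)

/-- Birkhoff sums of a function with negative mean are almost surely bounded above. -/
lemma ae_bddAbove_birkhoffSum (hT : Ergodic T μ) (hfm : Measurable f) (hf : Integrable f μ)
    (hneg : ∫ ω, f ω ∂μ < 0) :
    ∀ᵐ ω ∂μ, ∃ C : ℕ, ∀ n, birkhoffSum T f n ω ≤ C := by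
  set B : Set Ω := {ω | ∃ C : ℕ, ∀ n, birkhoffSum T f n ω ≤ C} with hB
  have hBm : MeasurableSet B := by
    have : B = ⋃ C : ℕ, ⋂ n : ℕ, {ω | birkhoffSum T f n ω ≤ C} := by
      ext ω; simp [hB]
    rw [this]
    exact MeasurableSet.iUnion fun C => MeasurableSet.iInter fun n =>
      measurableSet_le (measurable_birkhoffSum hT.measurable hfm n) measurable_const
  have hBinv : T ⁻¹' B = B := by
    ext ω
    constructor
    · rintro ⟨C, hC⟩
      obtain ⟨D, hD⟩ := exists_nat_ge (max 0 (f ω + C))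
      refine ⟨D, fun n => ?_⟩
      cases n with
      | zero => simp
      | succ n =>
        rw [birkhoffSum_succ']
        exact (add_le_add le_rfl (hC n)).trans ((le_max_right _ _).trans hD)
    · rintro ⟨C, hC⟩
      obtain ⟨D, hD⟩ := exists_nat_ge (C - f ω)
      refine ⟨D, fun n => ?_⟩
      have h := hC (n + 1)
      rw [birkhoffSum_succ'] at h
      linarith
  rcases hT.toPreErgodic.ae_mem_or_ae_notMem hBm hBinv with h | h
  · exact h
  exfalso
  have hlim : Tendsto (fun n => ∫ ω, max (-runningMax T f n (T ω)) (f ω) ∂μ) atTop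
      (𝓝 (∫ ω, f ω ∂μ)) := by
    refine tendsto_integral_of_dominated_convergence (fun ω => |f ω|) (fun n => ?_) hf.abs
      (fun n => ?_) ?_
    · exact (((hT.toMeasurePreserving.integrable_comp_of_integrable
        (integrable_runningMax hT.toMeasurePreserving hf n)).neg).sup hf).aestronglyMeasurable
    · filter_upwards with ω
      have := runningMax_nonneg (T := T) (f := f) n (T ω)
      rw [Real.norm_eq_abs, abs_le]
      refine ⟨(neg_abs_le _).trans (le_max_right _ _), max_le ?_ (le_abs_self _)⟩
      linarith [abs_nonneg (f ω)]
    · filter_upwards [h] with ω hω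
      have hTω : T ω ∉ B := fun hc => hω (hBinv ▸ hc : ω ∈ B)
      have hex : ∃ n, -f ω ≤ runningMax T f n (T ω) := by
        by_contra! hcon
        obtain ⟨C, hC⟩ := exists_nat_ge (-f ω)
        exact hTω ⟨C, fun n => (birkhoffSum_le_runningMax n _).trans ((hcon n).le.trans hC)⟩
      obtain ⟨N, hN⟩ := hex
      refine tendsto_const_nhds.congr' ?_
      filter_upwards [eventually_ge_atTop N] with n hn
      have hmono : Monotone fun n => runningMax T f n (T ω) :=
        monotone_nat_of_le_succ fun n => runningMax_le_succ n _
      have : runningMax T f N (T ω) ≤ runningMax T f n (T ω) := hmono hn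
      rw [max_eq_right]
      linarith
  refine absurd (ge_of_tendsto' hlim fun n => ?_) (not_le.mpr hneg)
  have hi := fun n => integrable_runningMax hT.toMeasurePreserving hf n
  have hiT : Integrable (fun ω => runningMax T f n (T ω)) μ :=
    hT.toMeasurePreserving.integrable_comp_of_integrable (hi n)
  have hTint : ∫ ω, runningMax T f n (T ω) ∂μ = ∫ ω, runningMax T f n ω ∂μ := by
    have h1 := integral_map (μ := μ) (φ := T) hT.measurable.aemeasurable
      (f := runningMax T f n) (by rw [hT.map_eq]; exact (hi n).aestronglyMeasurable)
    rw [hT.map_eq] at h1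
    exact h1.symm
  have hle := integral_mono (hi n) (hi (n + 1)) fun ω => runningMax_le_succ n ω
  have hsub : ∫ ω, max (-runningMax T f n (T ω)) (f ω) ∂μ
      = ∫ ω, runningMax T f (n + 1) ω ∂μ - ∫ ω, runningMax T f n (T ω) ∂μ := by
    rw [← integral_sub (hi (n + 1)) hiT]
    simp_rw [runningMax_succ_sub]
  rw [hsub, hTint]
  exact sub_nonneg.mpr hle

/-- The upper half of the pointwise ergodic theorem, in the form of a linear bound valid for all
times. -/
lemma ae_birkhoffSum_le (hT : Ergodic T μ) (hfm : Measurable f) (hf : Integrable f μ)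
    {c : ℝ} (hc : ∫ ω, f ω ∂μ < c) :
    ∀ᵐ ω ∂μ, ∃ C : ℝ, ∀ n : ℕ, birkhoffSum T f n ω ≤ C + c * n := by
  have hneg : ∫ ω, (f ω - c) ∂μ < 0 := by
    rw [integral_sub hf (integrable_const c)]
    simpa using hc
  filter_upwards [ae_bddAbove_birkhoffSum hT (hfm.sub_const c) (hf.sub (integrable_const c)) hneg]
    with ω ⟨C, hC⟩
  refine ⟨C, fun n => ?_⟩
  have h := hC n
  simp only [birkhoffSum, Finset.sum_sub_distrib, Finset.sum_const, Finset.card_range,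
    nsmul_eq_mul] at h ⊢
  linarith

/-- An integrable stationary sequence grows at most sublinearly: the truncated part
`(f - K)⁺` has mean below `δ` for large `K`, and each of its terms is at most the Birkhoff
sum containing it. -/
lemma ae_iterate_le (hT : Ergodic T μ) (hfm : Measurable f) (hf : Integrable f μ)
    {δ : ℝ} (hδ : 0 < δ) :
    ∀ᵐ ω ∂μ, ∃ C : ℝ, ∀ n : ℕ, f (T^[n] ω) ≤ C + δ * n := by
  have hlim : Tendsto (fun K : ℕ => ∫ ω, max (f ω - K) 0 ∂μ) atTop (𝓝 (∫ _, (0 : ℝ) ∂μ)) := by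
    refine tendsto_integral_of_dominated_convergence (fun ω => |f ω|) (fun K => ?_) hf.abs
      (fun K => ?_) ?_
    · exact ((hfm.sub_const _).max measurable_const).aestronglyMeasurable
    · filter_upwards with ω
      rw [Real.norm_eq_abs, abs_of_nonneg (le_max_right _ _)]
      have hK : (0 : ℝ) ≤ K := Nat.cast_nonneg K
      exact max_le (by linarith [le_abs_self (f ω)]) (abs_nonneg _)
    · filter_upwards with ω
      obtain ⟨N, hN⟩ := exists_nat_ge (f ω)
      refine tendsto_const_nhds.congr' ?_
      filter_upwards [eventually_ge_atTop N] with n hn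
      have : (N : ℝ) ≤ n := by exact_mod_cast hn
      rw [max_eq_right]
      linarith
  rw [integral_zero] at hlim
  obtain ⟨K, hK⟩ := (hlim.eventually_lt_const hδ).exists
  have hint : Integrable (fun ω => max (f ω - K) 0) μ :=
    (hf.sub (integrable_const (K : ℝ))).sup (integrable_const 0)
  filter_upwards [ae_birkhoffSum_le hT ((hfm.sub_const _).max measurable_const) hint hK]
    with ω ⟨C, hC⟩
  refine ⟨K + C + δ, fun n => ?_⟩
  have h := hC (n + 1)
  have hs : max (f (T^[n] ω) - K) 0 ≤ birkhoffSum T (fun ω => max (f ω - K) 0) (n + 1) ω :=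
    Finset.single_le_sum (f := fun i => max (f (T^[i] ω) - K) 0)
      (fun i _ => le_max_right _ _) (Finset.self_mem_range_succ n)
  have h1 := le_max_left (f (T^[n] ω) - K) 0
  push_cast at h
  linarith

end Ergodic

lemma prod_le_exp_sum_log (s : Finset ℕ) (x : ℕ → ℝ) (hx : ∀ i, 0 ≤ x i) :
    ∏ i ∈ s, x i ≤ Real.exp (∑ i ∈ s, Real.log (x i)) := by
  rw [Real.exp_sum]
  exact Finset.prod_le_prod (fun i _ => hx i) fun i _ => Real.le_exp_log (x i)

lemma measurable_plog : Measurable plog := Real.measurable_log.max measurable_const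

lemma le_exp_plog (x : ℝ) : x ≤ Real.exp (plog x) :=
  (Real.le_exp_log x).trans (Real.exp_le_exp.mpr (le_max_left _ _))

lemma summable_succ_mul_exp (D : ℝ) {ε : ℝ} (hε : 0 < ε) :
    Summable fun n : ℕ => ((n : ℝ) + 1) * Real.exp (D - ε * n) := by
  have h1 := Real.summable_pow_mul_exp_neg_nat_mul 1 hε
  have h0 := Real.summable_pow_mul_exp_neg_nat_mul 0 hε
  refine ((h1.add h0).mul_left (Real.exp D)).congr fun n => ?_
  rw [sub_eq_add_neg, Real.exp_add, neg_mul]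
  ring

/-- Summability of the double series when both logarithmic means are negative. -/
lemma ae_summable_double {Ω : Type*} [MeasurableSpace Ω] {μ : Measure Ω} [IsProbabilityMeasure μ]
    {T : Ω → Ω} (hT : Ergodic T μ)
    (a b g : Ω → ℝ) (hma : Measurable a) (hmb : Measurable b) (hmg : Measurable g)
    (ha : ∀ ω, 0 ≤ a ω) (hb : ∀ ω, 0 ≤ b ω) (hg : ∀ ω, 0 ≤ g ω)
    (hia : Integrable (fun ω => Real.log (a ω)) μ)
    (hib : Integrable (fun ω => Real.log (b ω)) μ)
    (hig : Integrable (fun ω => plog (g ω)) μ)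
    (hmax : max (∫ ω, Real.log (a ω) ∂μ) (∫ ω, Real.log (b ω) ∂μ) < 0) :
    ∀ᵐ ω ∂μ, Summable (fun n : ℕ =>
      g (T^[n] ω) * ∑ k ∈ Finset.range (n + 1),
        (∏ i ∈ Finset.range k, a (T^[i] ω)) * ∏ i ∈ Finset.Ico k n, b (T^[i] ω)) := by
  set A := ∫ ω, Real.log (a ω) ∂μ with hA
  set B := ∫ ω, Real.log (b ω) ∂μ with hB
  obtain ⟨δ, hδ, hAδ, hBδ⟩ : ∃ δ > 0, A ≤ -(8 * δ) ∧ B ≤ -(8 * δ) :=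
    ⟨-max A B / 8, by linarith, by linarith [le_max_left A B], by linarith [le_max_right A B]⟩
  have hma' : Measurable fun ω => Real.log (a ω) := Real.measurable_log.comp hma
  have hmb' : Measurable fun ω => Real.log (b ω) := Real.measurable_log.comp hmb
  have hBneg : ∫ ω, -Real.log (b ω) ∂μ < -B + δ := by
    rw [integral_neg]; linarith
  filter_upwards [ae_birkhoffSum_le hT hma' hia (c := A + δ) (by linarith),
    ae_birkhoffSum_le hT hmb' hib (c := B + δ) (by linarith),
    ae_birkhoffSum_le hT hmb'.neg hib.neg hBneg,
    ae_iterate_le hT (measurable_plog.comp hmg) hig hδ]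
    with ω ⟨C₁, h₁⟩ ⟨C₂, h₂⟩ ⟨C₃, h₃⟩ ⟨C₄, h₄⟩
  refine Summable.of_nonneg_of_le (fun n => ?_) (fun n => ?_)
    (summable_succ_mul_exp (C₁ + C₂ + C₃ + C₄) (mul_pos (by norm_num : (0 : ℝ) < 4) hδ))
  · exact mul_nonneg (hg _) (Finset.sum_nonneg fun k _ =>
      mul_nonneg (Finset.prod_nonneg fun i _ => ha _) (Finset.prod_nonneg fun i _ => hb _))
  rw [Finset.mul_sum]
  refine (Finset.sum_le_card_nsmul _ _ (Real.exp (C₁ + C₂ + C₃ + C₄ - 4 * δ * n))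
    fun k hk => ?_).trans_eq (by simp)
  have hkn : k ≤ n := Nat.lt_succ_iff.mp (Finset.mem_range.mp hk)
  have e₁ := prod_le_exp_sum_log (Finset.range k) (fun i => a (T^[i] ω)) fun i => ha _
  have e₂ := prod_le_exp_sum_log (Finset.Ico k n) (fun i => b (T^[i] ω)) fun i => hb _
  have e₃ := le_exp_plog (g (T^[n] ω))
  calc _ ≤ Real.exp (plog (g (T^[n] ω))) *
        (Real.exp (∑ i ∈ Finset.range k, Real.log (a (T^[i] ω))) *
          Real.exp (∑ i ∈ Finset.Ico k n, Real.log (b (T^[i] ω)))) :=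
        mul_le_mul e₃ (mul_le_mul e₁ e₂ (Finset.prod_nonneg fun i _ => hb _) (Real.exp_nonneg _))
          (mul_nonneg (Finset.prod_nonneg fun i _ => ha _) (Finset.prod_nonneg fun i _ => hb _))
          (Real.exp_nonneg _)
    _ ≤ _ := by
        rw [← Real.exp_add, ← Real.exp_add, Real.exp_le_exp, Finset.sum_Ico_eq_sub _ hkn]
        have i₁ := h₁ k
        have i₂ := h₂ n
        have i₃ := h₃ k
        have i₄ := h₄ n
        simp only [birkhoffSum, Finset.sum_neg_distrib, Pi.neg_apply, Function.comp_apply]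
          at i₁ i₂ i₃ i₄
        have hk' : (k : ℝ) ≤ n := by exact_mod_cast hkn
        have hk0 : (0 : ℝ) ≤ k := Nat.cast_nonneg k
        -- The exponent is at most `C + A k + B (n - k) + δ (2 k + 2 n)` with `A, B ≤ -8 δ`.
        nlinarith [mul_le_mul_of_nonneg_right hAδ hk0,
          mul_le_mul_of_nonneg_right hBδ (sub_nonneg.mpr hk'), mul_le_mul_of_nonneg_left hk' hδ.le]

/-- **Corollary 2.6.**
Let `(α_n, β_n, γ_n)_{n ≥ 0}` be a stationary and ergodic sequence of triples of
non-negative random variables, realized as `(a, b, g) ∘ T^n` for an ergodic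
measure-preserving transformation `T`, with `E|log α₀| < ∞`, `E|log β₀| < ∞` and
`E log⁺ γ₀ < ∞`.
(a) If `max (E log α₀) (E log β₀) < 0`, then
`∑_{n=0}^∞ γ_n ∑_{k=0}^{n} α₀⋯α_{k−1} β_k⋯β_{n−1} < ∞` almost surely.
(b) If `E log α₀ < 0`, then `∑_{n=0}^∞ α₀⋯α_{n−1} γ_n < ∞` almost surely. -/
theorem summable_weighted_sums_of_neg_log_means
    {Ω : Type*} [MeasurableSpace Ω] {μ : Measure Ω} [IsProbabilityMeasure μ]
    {T : Ω → Ω} (hT : Ergodic T μ)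
    (a b g : Ω → ℝ) (hma : Measurable a) (hmb : Measurable b) (hmg : Measurable g)
    (ha : ∀ ω, 0 ≤ a ω) (hb : ∀ ω, 0 ≤ b ω) (hg : ∀ ω, 0 ≤ g ω)
    (hia : Integrable (fun ω => Real.log (a ω)) μ)
    (hib : Integrable (fun ω => Real.log (b ω)) μ)
    (hig : Integrable (fun ω => plog (g ω)) μ) :
    (max (∫ ω, Real.log (a ω) ∂μ) (∫ ω, Real.log (b ω) ∂μ) < 0 →
      ∀ᵐ ω ∂μ, Summable (fun n : ℕ =>
        g (T^[n] ω) * ∑ k ∈ Finset.range (n + 1),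
          (∏ i ∈ Finset.range k, a (T^[i] ω)) * ∏ i ∈ Finset.Ico k n, b (T^[i] ω)))
    ∧ ((∫ ω, Real.log (a ω) ∂μ) < 0 →
      ∀ᵐ ω ∂μ, Summable (fun n : ℕ =>
        (∏ i ∈ Finset.range n, a (T^[i] ω)) * g (T^[n] ω))) := by
  have hD := ae_summable_double hT a b g hma hmb hmg ha hb hg hia hib hig
  refine ⟨hD, fun hA => ?_⟩
  filter_upwards [ae_summable_double hT a a g hma hma hmg ha ha hg hia hia hig (by simpa using hA)]
    with ω hω
  refine Summable.of_nonneg_of_le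
    (fun n => mul_nonneg (Finset.prod_nonneg fun i _ => ha _) (hg _)) (fun n => ?_) hω
  rw [mul_comm]
  refine mul_le_mul_of_nonneg_left ?_ (hg _)
  -- The summand `k = n`, in which the product over `Finset.Ico n n` is empty.
  have h := Finset.single_le_sum
    (f := fun k => (∏ i ∈ Finset.range k, a (T^[i] ω)) * ∏ i ∈ Finset.Ico k n, a (T^[i] ω))
    (fun k _ => mul_nonneg (Finset.prod_nonneg fun i _ => ha _)
      (Finset.prod_nonneg fun i _ => ha _)) (Finset.self_mem_range_succ n)
  simpa using h

end
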